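/- Let d be a distortion function, h : ℝ → ℝ strictly increasing, continuous, and surjective, and u : ℝ → ℝ increasing and continuous. Set ψ = h ∘ u ∘ h⁻¹ and ω = h⁻¹ ∘ u ∘ h (both increasing and continuous). Then T^ψ ∘ (T_d ∘ T^h) = (T_d ∘ T^h) ∘ T^u and (T_d ∘ T^h) ∘ T^ω = T^u ∘ (T_d ∘ T^h) as maps from M to M. -/

import Mathlib

/-!
The key point is that, for `u` increasing and continuous, the utility transform `T^u` commutes with
every probability distortion `T_d` (`distortT_utilityT`). If `{u ≤ x} = Iic c`, then
`T^u F x = F c`; as `y ↓ x`, the sets `{u ≤ y}` are contained in `Iic z` for `z` arbitrarily close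
to `c`, and by continuity of `u` each of them reaches strictly beyond `c`. Hence
`T_d (T^u F) x` is the right limit of `d ∘ F` at `c`, which is `T^u (T_d F) x`. The cases
`{u ≤ x} = ∅` and `{u ≤ x} = univ` give `0` and `1` because `F` has compact support.

Combined with functoriality `T^u ∘ T^v = T^(u ∘ v)` (`utilityT_comp`), both identities reduce to
`ψ ∘ h = h ∘ u` and `h ∘ ω = u ∘ h`.
-/

open MeasureTheory Filter Topology Set

noncomputable section

/-- The set of cdfs of compactly supported probability distributions on ℝ:
increasing, right-continuous, equal to `0` for all sufficiently small `x` and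
equal to `1` for all sufficiently large `x`. -/
def mSet : Set (ℝ → ℝ) :=
  {F | Monotone F ∧ (∀ x, ContinuousWithinAt F (Set.Ici x) x) ∧
    (∃ a, ∀ x ≤ a, F x = 0) ∧ (∃ b, ∀ x, b ≤ x → F x = 1)}

/-- The set of cdfs of all probability distributions on ℝ: increasing,
right-continuous, with limit `0` at `-∞` and limit `1` at `+∞`. -/
def m0Set : Set (ℝ → ℝ) :=
  {F | Monotone F ∧ (∀ x, ContinuousWithinAt F (Set.Ici x) x) ∧
    Tendsto F atBot (𝓝 0) ∧ Tendsto F atTop (𝓝 1)}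

/-- A utility function: increasing (non-strict) and continuous. -/
def IsUF (u : ℝ → ℝ) : Prop := Monotone u ∧ Continuous u

/-- An increasing and left-continuous function on ℝ. -/
def IsLeftCtsIncr (u : ℝ → ℝ) : Prop :=
  Monotone u ∧ ∀ x, ContinuousWithinAt u (Set.Iic x) x

/-- A distortion function: an increasing function `d : [0,1] → [0,1]` with
`d 0 = 0` and `d 1 = 1` (values outside `[0,1]` are irrelevant). -/
def IsDF (d : ℝ → ℝ) : Prop :=
  MonotoneOn d (Set.Icc 0 1) ∧ d 0 = 0 ∧ d 1 = 1

/-- Right-continuity of a distortion function on `[0,1)`. -/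
def DFRightCts (d : ℝ → ℝ) : Prop :=
  ∀ x ∈ Set.Ico (0:ℝ) 1, ContinuousWithinAt d (Set.Ioi x) x

/-- A distortion function with moreover `d(0+) = 0` and `d(1-) = 1`. -/
def IsDFhat (d : ℝ → ℝ) : Prop :=
  IsDF d ∧ Tendsto d (𝓝[>] (0:ℝ)) (𝓝 0) ∧ Tendsto d (𝓝[<] (1:ℝ)) (𝓝 1)

/-- The probability distortion generated by `d`:  `T_d F x = (d ∘ F)(x+)`,
the right limit of `d ∘ F` at `x`. -/
noncomputable def distortT (d F : ℝ → ℝ) : ℝ → ℝ :=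
  fun x => Function.rightLim (d ∘ F) x

/-- The utility transform `T^u`: it maps a cdf `F` to the cdf of the
pushforward under `u` of the probability measure with cdf `F`. -/
noncomputable def utilityT (u F : ℝ → ℝ) : ℝ → ℝ := by
  classical
  exact
    if h : Monotone F ∧ ∀ x, ContinuousWithinAt F (Set.Ici x) x then
      fun x => ((StieltjesFunction.measure ⟨F, h.1, h.2⟩).map u (Set.Iic x)).toReal
    else F

/-- Left quantile `F_L^{-1}(p) = inf {x | F x ≥ p}`. -/
noncomputable def leftQ (F : ℝ → ℝ) (p : ℝ) : ℝ := sInf {x | p ≤ F x}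

/-- Right quantile `F_R^{-1}(p) = inf {x | F x > p}`. -/
noncomputable def rightQ (F : ℝ → ℝ) (p : ℝ) : ℝ := sInf {x | p < F x}

/-- The probability measure whose cdf is `F`. -/
def muOf (F : ℝ → ℝ) (hF : F ∈ mSet) : Measure ℝ :=
  StieltjesFunction.measure ⟨F, hF.1, hF.2.1⟩

lemma tendsto_bot_of_mem {F : ℝ → ℝ} (hF : F ∈ mSet) : Tendsto F atBot (𝓝 0) := by
  obtain ⟨a, ha⟩ := hF.2.2.1
  refine tendsto_const_nhds.congr' ?_
  filter_upwards [eventually_le_atBot a] with x hx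
  exact (ha x hx).symm

lemma tendsto_top_of_mem {F : ℝ → ℝ} (hF : F ∈ mSet) : Tendsto F atTop (𝓝 1) := by
  obtain ⟨b, hb⟩ := hF.2.2.2
  refine tendsto_const_nhds.congr' ?_
  filter_upwards [eventually_ge_atTop b] with x hx
  exact (hb x hx).symm

lemma mem_Icc_of_mem {F : ℝ → ℝ} (hF : F ∈ mSet) (x : ℝ) : F x ∈ Icc (0 : ℝ) 1 :=
  ⟨hF.1.le_of_tendsto (tendsto_bot_of_mem hF) x, hF.1.ge_of_tendsto (tendsto_top_of_mem hF) x⟩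

lemma isProbabilityMeasure_muOf {F : ℝ → ℝ} (hF : F ∈ mSet) :
    IsProbabilityMeasure (muOf F hF) :=
  StieltjesFunction.isProbabilityMeasure _ (tendsto_bot_of_mem hF) (tendsto_top_of_mem hF)

lemma muOf_real_Iic {F : ℝ → ℝ} (hF : F ∈ mSet) (x : ℝ) : (muOf F hF).real (Iic x) = F x := by
  rw [measureReal_def, muOf, StieltjesFunction.measure_Iic _ (tendsto_bot_of_mem hF)]
  simpa using (mem_Icc_of_mem hF x).1

lemma utilityT_eq {u F : ℝ → ℝ} (hu : IsUF u) (hF : F ∈ mSet) (x : ℝ) :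
    utilityT u F x = (muOf F hF).real (u ⁻¹' Iic x) := by
  rw [utilityT, dif_pos ⟨hF.1, hF.2.1⟩, measureReal_def,
    ← Measure.map_apply hu.2.measurable measurableSet_Iic]
  rfl

lemma utilityT_eq_cdf {u F : ℝ → ℝ} (hu : IsUF u) (hF : F ∈ mSet) :
    utilityT u F = ProbabilityTheory.cdf ((muOf F hF).map u) := by
  have := isProbabilityMeasure_muOf hF
  have := Measure.isProbabilityMeasure_map (μ := muOf F hF) hu.2.measurable.aemeasurable
  ext x
  rw [utilityT_eq hu hF, ProbabilityTheory.cdf_eq_real,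
    map_measureReal_apply hu.2.measurable measurableSet_Iic]

lemma utilityT_le {u F : ℝ → ℝ} (hu : IsUF u) (hF : F ∈ mSet) {y c : ℝ}
    (h : ∀ z, u z ≤ y → z ≤ c) : utilityT u F y ≤ F c := by
  have := isProbabilityMeasure_muOf hF
  rw [utilityT_eq hu hF, ← muOf_real_Iic hF c]
  exact measureReal_mono h

lemma le_utilityT {u F : ℝ → ℝ} (hu : IsUF u) (hF : F ∈ mSet) {y c : ℝ}
    (h : u c ≤ y) : F c ≤ utilityT u F y := by
  have := isProbabilityMeasure_muOf hF
  rw [utilityT_eq hu hF, ← muOf_real_Iic hF c]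
  exact measureReal_mono fun z hz => (hu.1 hz).trans h

lemma utilityT_mem_Icc {u F : ℝ → ℝ} (hu : IsUF u) (hF : F ∈ mSet) (x : ℝ) :
    utilityT u F x ∈ Icc (0 : ℝ) 1 := by
  have := isProbabilityMeasure_muOf hF
  rw [utilityT_eq hu hF]
  exact ⟨measureReal_nonneg, measureReal_le_one⟩

lemma utilityT_mem {u F : ℝ → ℝ} (hu : IsUF u) (hF : F ∈ mSet) : utilityT u F ∈ mSet := by
  refine ⟨?_, ?_, ?_, ?_⟩
  · rw [utilityT_eq_cdf hu hF]
    exact ProbabilityTheory.monotone_cdf _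
  · rw [utilityT_eq_cdf hu hF]
    exact (ProbabilityTheory.cdf _).right_continuous
  · obtain ⟨a, ha⟩ := hF.2.2.1
    refine ⟨u a - 1, fun x hx => le_antisymm ?_ (utilityT_mem_Icc hu hF x).1⟩
    rw [← ha a le_rfl]
    refine utilityT_le hu hF fun z hz => le_of_not_gt fun hlt => ?_
    have := hu.1 hlt.le
    linarith
  · obtain ⟨b, hb⟩ := hF.2.2.2
    refine ⟨u b, fun x hx => le_antisymm (utilityT_mem_Icc hu hF x).2 ?_⟩
    rw [← hb b le_rfl]
    exact le_utilityT hu hF hx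

lemma muOf_utilityT {u F : ℝ → ℝ} (hu : IsUF u) (hF : F ∈ mSet) :
    muOf (utilityT u F) (utilityT_mem hu hF) = (muOf F hF).map u := by
  have := isProbabilityMeasure_muOf hF
  have := Measure.isProbabilityMeasure_map (μ := muOf F hF) hu.2.measurable.aemeasurable
  conv_rhs => rw [← ProbabilityTheory.measure_cdf ((muOf F hF).map u)]
  rw [muOf]
  congr 1
  ext x
  exact congrFun (utilityT_eq_cdf hu hF) x

lemma IsUF.comp {u v : ℝ → ℝ} (hu : IsUF u) (hv : IsUF v) : IsUF (u ∘ v) :=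
  ⟨hu.1.comp hv.1, hu.2.comp hv.2⟩

lemma utilityT_comp {u v F : ℝ → ℝ} (hu : IsUF u) (hv : IsUF v) (hF : F ∈ mSet) :
    utilityT u (utilityT v F) = utilityT (u ∘ v) F := by
  ext x
  rw [utilityT_eq hu (utilityT_mem hv hF), utilityT_eq (hu.comp hv) hF, muOf_utilityT hv hF,
    map_measureReal_apply hv.2.measurable (hu.2.measurable measurableSet_Iic), preimage_comp]

lemma monotone_df_comp {d F : ℝ → ℝ} (hd : IsDF d) (hF : F ∈ mSet) : Monotone (d ∘ F) :=
  fun x y hxy => hd.1 (mem_Icc_of_mem hF x) (mem_Icc_of_mem hF y) (hF.1 hxy)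

lemma distortT_mem {d F : ℝ → ℝ} (hd : IsDF d) (hF : F ∈ mSet) : distortT d F ∈ mSet := by
  have hm := monotone_df_comp hd hF
  refine ⟨hm.rightLim, hm.stieltjesFunction.right_continuous, ?_, ?_⟩
  · obtain ⟨a, ha⟩ := hF.2.2.1
    refine ⟨a - 1, fun x hx => rightLim_eq_of_tendsto ?_⟩
    refine tendsto_const_nhds.congr' ?_
    filter_upwards [mem_nhdsWithin_of_mem_nhds (Iio_mem_nhds (show x < a by linarith))] with y hy
    simp [ha y (le_of_lt hy), hd.2.1]
  · obtain ⟨b, hb⟩ := hF.2.2.2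
    refine ⟨b, fun x hx => rightLim_eq_of_tendsto ?_⟩
    refine tendsto_const_nhds.congr' ?_
    filter_upwards [self_mem_nhdsWithin] with y hy
    simp [hb y (hx.trans (le_of_lt hy)), hd.2.2]

/-- Continuity of `u` is essential here: it makes `{u ≤ y}` strictly larger than `{u ≤ x}` whenever
`x < y` and the latter set is of the form `Iic c`. -/
lemma distortT_utilityT {d u F : ℝ → ℝ} (hd : IsDF d) (hu : IsUF u) (hF : F ∈ mSet) :
    distortT d (utilityT u F) = utilityT u (distortT d F) := by
  ext x
  have hG := distortT_mem hd hF
  have hm := monotone_df_comp hd hF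
  have hI := mem_Icc_of_mem hF
  have hU := utilityT_mem_Icc hu hF
  refine rightLim_eq_of_tendsto ?_
  by_cases htop : ∀ z, u z ≤ x
  · have key : ∀ {F : ℝ → ℝ}, F ∈ mSet → ∀ y, x ≤ y → utilityT u F y = 1 := by
      intro F hF y hy
      obtain ⟨b, hb⟩ := hF.2.2.2
      refine le_antisymm (utilityT_mem_Icc hu hF y).2 ?_
      rw [← hb b le_rfl]
      exact le_utilityT hu hF ((htop b).trans hy)
    rw [key hG x le_rfl]
    refine tendsto_const_nhds.congr' ?_
    filter_upwards [self_mem_nhdsWithin] with y hy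
    simp [key hF y (le_of_lt hy), hd.2.2]
  by_cases hbot : ∀ z, x < u z
  · have key : ∀ {F : ℝ → ℝ}, F ∈ mSet → ∃ t, x < t ∧ ∀ y, y < t → utilityT u F y = 0 := by
      intro F hF
      obtain ⟨a, ha⟩ := hF.2.2.1
      refine ⟨u a, hbot a, fun y hy => le_antisymm ?_ (utilityT_mem_Icc hu hF y).1⟩
      rw [← ha a le_rfl]
      exact utilityT_le hu hF fun z hz =>
        le_of_not_gt fun hlt => ((hz.trans_lt hy).trans_le (hu.1 hlt.le)).false
    obtain ⟨s, hs, hs'⟩ := key hG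
    obtain ⟨t, ht, ht'⟩ := key hF
    rw [hs' x hs]
    refine tendsto_const_nhds.congr' ?_
    filter_upwards [mem_nhdsWithin_of_mem_nhds (Iio_mem_nhds ht)] with y hy
    simp [ht' y hy, hd.2.1]
  push Not at htop hbot
  obtain ⟨p, hp⟩ := htop
  obtain ⟨q, hq⟩ := hbot
  have hbdd : BddAbove (u ⁻¹' Iic x) :=
    ⟨p, fun z hz => le_of_not_gt fun hlt => ((hp.trans_le (hu.1 hlt.le)).trans_le hz).false⟩
  obtain ⟨c, hc⟩ : ∃ c, c = sSup (u ⁻¹' Iic x) := ⟨_, rfl⟩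
  have hcx : u c ≤ x := by
    have := (isClosed_Iic.preimage hu.2).csSup_mem ⟨q, hq⟩ hbdd
    rwa [← hc] at this
  have hle : ∀ z, u z ≤ x → z ≤ c := fun z hz => hc ▸ le_csSup hbdd hz
  rw [le_antisymm (utilityT_le hu hG hle) (le_utilityT hu hG hcx)]
  refine tendsto_order.2 ⟨fun a ha => ?_, fun b hb => ?_⟩
  · filter_upwards [self_mem_nhdsWithin] with y hy
    -- By continuity of `u` at `c`, some `w > c` still satisfies `u w < y`.
    obtain ⟨w, hwy, hw⟩ := (((hu.2.tendsto c).eventually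
      (Iio_mem_nhds (hcx.trans_lt hy))).filter_mono nhdsWithin_le_nhds |>.and
      (self_mem_nhdsWithin (a := c) (s := Ioi c))).exists
    calc a < distortT d F c := ha
      _ ≤ d (F w) := hm.rightLim_le hw
      _ ≤ d (utilityT u F y) := hd.1 (hI w) (hU y) (le_utilityT hu hF (le_of_lt hwy))
  · obtain ⟨z, hzb, hz⟩ := (((hm.tendsto_rightLim c).eventually (Iio_mem_nhds hb)).and
      (self_mem_nhdsWithin (a := c) (s := Ioi c))).exists
    have hxz : x < u z := lt_of_not_ge fun h => (hle z h).not_gt hz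
    filter_upwards [mem_nhdsWithin_of_mem_nhds (Iio_mem_nhds hxz)] with y hy
    refine lt_of_le_of_lt (hd.1 (hU y) (hI z) (utilityT_le hu hF fun t ht => ?_)) hzb
    exact le_of_not_gt fun hlt => ((ht.trans_lt hy).trans_le (hu.1 hlt.le)).false

/-- For a distortion function `d`, a strictly increasing continuous surjective
`h`, and an increasing continuous `u`, with `ψ = h ∘ u ∘ h⁻¹` and
`ω = h⁻¹ ∘ u ∘ h`, one has `T^ψ ∘ (T_d ∘ T^h) = (T_d ∘ T^h) ∘ T^u` and
`(T_d ∘ T^h) ∘ T^ω = T^u ∘ (T_d ∘ T^h)` as maps from `M` to `M`. -/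
theorem stmt19 (d h u : ℝ → ℝ) (hd : IsDF d) (hh : StrictMono h)
    (hhc : Continuous h) (hhs : Function.Surjective h) (hu : IsUF u) :
    (∀ F ∈ mSet,
      utilityT (h ∘ u ∘ Function.invFun h) (distortT d (utilityT h F)) =
        distortT d (utilityT h (utilityT u F))) ∧
    (∀ F ∈ mSet,
      distortT d (utilityT h (utilityT (Function.invFun h ∘ u ∘ h) F)) =
        utilityT u (distortT d (utilityT h F))) := by
  have hhU : IsUF h := ⟨hh.monotone, hhc⟩
  have hl : Function.LeftInverse (Function.invFun h) h := Function.leftInverse_invFun hh.injective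
  have hr : Function.RightInverse (Function.invFun h) h := Function.rightInverse_invFun hhs
  have hinv : IsUF (Function.invFun h) := by
    have hmono : Monotone (Function.invFun h) := fun x y hxy => by
      rw [← hh.le_iff_le, hr x, hr y]
      exact hxy
    exact ⟨hmono, hmono.continuous_of_surjective hl.surjective⟩
  have hψ : IsUF (h ∘ u ∘ Function.invFun h) := hhU.comp (hu.comp hinv)
  have hω : IsUF (Function.invFun h ∘ u ∘ h) := hinv.comp (hu.comp hhU)
  have eψ : (h ∘ u ∘ Function.invFun h) ∘ h = h ∘ u := by
    ext x
    simp [hl x]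
  have eω : h ∘ (Function.invFun h ∘ u ∘ h) = u ∘ h := by
    ext x
    simp [hr (u (h x))]
  refine ⟨fun F hF => ?_, fun F hF => ?_⟩
  · rw [← distortT_utilityT hd hψ (utilityT_mem hhU hF), utilityT_comp hψ hhU hF,
      utilityT_comp hhU hu hF, eψ]
  · rw [← distortT_utilityT hd hu (utilityT_mem hhU hF), utilityT_comp hhU hω hF,
      utilityT_comp hu hhU hF, eω]
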